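/- Let m ≥ 1 be a natural number and let γ : (0,1] → (0,∞) satisfy γ(s) ≤ s + s² + ... + s^m for all s ∈ (0,1]. Let β : [0,∞) → [0,1) have property (MT) and let α : [0,∞) → [1,∞) satisfy α(t) ≤ 1 + γ(1−β(t)) for all t ≥ 0. Then every (α,β)-mapping F of a nonempty complete metric space (X,d) into itself with nonempty closed values whose distance function d_F is stably positive has a fixed point x* ∈ F(x*). (Indeed p(s) = s − (1−s)γ(s) ≥ s^{m+1} on (0,1], so the hypotheses of the main two-parameter fixed point theorem are satisfied.) -/

import Mathlib

/-! Iterating the selection in the definition of an `(α, β)`-mapping gives an orbit with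
displacements `d n = dist(x n, F (x n))` and steps `t n = d(x n, x (n + 1))` satisfying
`d (n + 1) ≤ α (t n) β (t n) d n`. Hence `d` decreases to some `D`. Where `β (t n) ≤ b < 1`, the
product `α β` is at most some `q < 1`, so `t n` is controlled by `d n - d (n + 1) → 0`; where
`b < β (t n)`, the inequality `α β < 1` gives `t n ≤ d n / b`. Letting `b → 1` shows `t n → D`, and
the convergence is from the right, so property (MT) at `D` bounds `β (t n)` away from `1`. Thus `d`
eventually decays geometrically, the orbit is Cauchy, and stable positivity makes the distance
function vanish at its limit.

For `α ≤ 1 + γ (1 - β)` with `s = 1 - β`, the geometric sum gives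
`α β ≤ (1 + s + ⋯ + s ^ m) (1 - s) = 1 - s ^ (m + 1)`. -/

open Filter Metric Set Topology

/-- Property (MT) of a function `k : [0, ∞) → [0, 1)`, encoded as a real function whose values at
negative arguments play no role. The real-valued `limsup` has its intended meaning only when `k` is
bounded above to the right of `t`. -/
def HasPropertyMT (k : ℝ → ℝ) : Prop :=
  ∀ t, 0 ≤ t → limsup k (𝓝[>] t) < 1

/-- A function is stably positive if near each point where it is positive it is bounded below by a
positive constant. -/
def StablyPositive {X : Type*} [TopologicalSpace X] (h : X → ℝ) : Prop :=
  ∀ x, 0 < h x → ∃ U ∈ 𝓝 x, ∃ c > (0 : ℝ), ∀ y ∈ U, c ≤ h y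

/-- The set-valued map `F` is an `(α, β)`-mapping: from each point one can step to a point of its
image that is nearest up to the factor `α`, and whose own distance to its image is at most `β` times
the length of the step. -/
def IsAlphaBetaMapping {X : Type*} [PseudoMetricSpace X] (α β : ℝ → ℝ) (F : X → Set X) : Prop :=
  ∀ x, ∃ y ∈ F x, dist x y ≤ α (dist x y) * infDist x (F x) ∧
    infDist y (F y) ≤ β (dist x y) * dist x y

/-- The interplay of `α` and `β` that replaces the condition on `γ`: the product `α β` stays away
from `1` as long as `β` does. -/
def HasProductGap (α β : ℝ → ℝ) : Prop :=
  ∀ b < 1, ∃ q < 1, ∀ t, 0 ≤ t → β t ≤ b → α t * β t ≤ q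

/-- The relations between the distances `d n = dist(x n, F (x n))` and the step lengths
`t n = dist (x n) (x (n + 1))` along an orbit of an `(α, β)`-mapping that meets no fixed point. -/
structure IsDisplacementPair (α β : ℝ → ℝ) (d t : ℕ → ℝ) : Prop where
  pos : ∀ n, 0 < d n
  le_step : ∀ n, d n ≤ t n
  step_le : ∀ n, t n ≤ α (t n) * d n
  next_le : ∀ n, d (n + 1) ≤ β (t n) * t n

theorem HasPropertyMT.exists_eventually_lt {k : ℝ → ℝ} (hk : HasPropertyMT k)
    (hk1 : ∀ t, 0 ≤ t → k t < 1) {t : ℝ} (ht : 0 ≤ t) :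
    ∃ b < 1, ∀ᶠ s in 𝓝[>] t, k s < b := by
  obtain ⟨b, hb, hb1⟩ := exists_between (hk t ht)
  have hbdd : IsBoundedUnder (· ≤ ·) (𝓝[>] t) k :=
    isBoundedUnder_of_eventually_le <| eventually_mem_nhdsWithin.mono fun s hs =>
      (hk1 s (ht.trans (le_of_lt hs))).le
  exact ⟨b, hb1, eventually_lt_of_limsup_lt hb hbdd⟩

theorem StablyPositive.nonpos_of_tendsto {X ι : Type*} [TopologicalSpace X] {h : X → ℝ}
    (hh : StablyPositive h) {l : Filter ι} [l.NeBot] {x : ι → X} {z : X}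
    (hx : Tendsto x l (𝓝 z)) (hhx : Tendsto (fun i => h (x i)) l (𝓝 0)) : h z ≤ 0 := by
  by_contra! hz
  obtain ⟨U, hU, c, hc, hcU⟩ := hh z hz
  have hc_le : ∀ᶠ i in l, c ≤ h (x i) := (hx.eventually_mem hU).mono fun i => hcU (x i)
  exact hc.not_ge (ge_of_tendsto hhx hc_le)

theorem HasProductGap.mul_lt_one {α β : ℝ → ℝ} (hgap : HasProductGap α β) {t : ℝ} (ht : 0 ≤ t)
    (hβ : β t < 1) : α t * β t < 1 := by
  obtain ⟨q, hq, hle⟩ := hgap (β t) hβ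
  exact (hle t ht le_rfl).trans_lt hq

namespace IsDisplacementPair

variable {α β : ℝ → ℝ} {d t : ℕ → ℝ}

theorem step_pos (h : IsDisplacementPair α β d t) (n : ℕ) : 0 < t n :=
  (h.pos n).trans_le (h.le_step n)

theorem beta_step_pos (h : IsDisplacementPair α β d t) (n : ℕ) : 0 < β (t n) :=
  pos_of_mul_pos_left ((h.pos (n + 1)).trans_le (h.next_le n)) (h.step_pos n).le

theorem beta_mul_step_le (h : IsDisplacementPair α β d t) (n : ℕ) :
    β (t n) * t n ≤ α (t n) * β (t n) * d n :=
  calc β (t n) * t n ≤ β (t n) * (α (t n) * d n) :=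
        mul_le_mul_of_nonneg_left (h.step_le n) (h.beta_step_pos n).le
    _ = α (t n) * β (t n) * d n := by ring

theorem next_le_mul (h : IsDisplacementPair α β d t) {n : ℕ} {q : ℝ}
    (hq : α (t n) * β (t n) ≤ q) : d (n + 1) ≤ q * d n :=
  ((h.next_le n).trans (h.beta_mul_step_le n)).trans
    (mul_le_mul_of_nonneg_right hq (h.pos n).le)

theorem strictAnti (h : IsDisplacementPair α β d t) (hαβ : ∀ n, α (t n) * β (t n) < 1) :
    StrictAnti d :=
  strictAnti_nat_of_succ_lt fun n =>
    ((h.next_le n).trans (h.beta_mul_step_le n)).trans_lt (mul_lt_of_lt_one_left (h.pos n) (hαβ n))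

theorem step_le_mul (h : IsDisplacementPair α β d t) {A : ℝ} (hA : ∀ s, 0 ≤ s → α s ≤ A) (n : ℕ) :
    t n ≤ A * d n :=
  (h.step_le n).trans (mul_le_mul_of_nonneg_right (hA _ (h.step_pos n).le) (h.pos n).le)

theorem mul_step_le_of_le_beta (h : IsDisplacementPair α β d t) {n : ℕ} {b : ℝ}
    (hb : b ≤ β (t n)) (hαβ : α (t n) * β (t n) ≤ 1) : b * t n ≤ d n :=
  calc b * t n ≤ β (t n) * t n := mul_le_mul_of_nonneg_right hb (h.step_pos n).le
    _ ≤ α (t n) * β (t n) * d n := h.beta_mul_step_le n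
    _ ≤ d n := mul_le_of_le_one_left (h.pos n).le hαβ

theorem one_sub_mul_step_le (h : IsDisplacementPair α β d t) {A : ℝ}
    (hA : ∀ s, 0 ≤ s → α s ≤ A) {n : ℕ} {q : ℝ} (hq1 : q ≤ 1) (hq : α (t n) * β (t n) ≤ q) :
    (1 - q) * t n ≤ A * (d n - d (n + 1)) := by
  have hA0 : 0 < A :=
    pos_of_mul_pos_left ((h.step_pos n).trans_le (h.step_le_mul hA n)) (h.pos n).le
  calc (1 - q) * t n ≤ (1 - q) * (A * d n) :=
        mul_le_mul_of_nonneg_left (h.step_le_mul hA n) (sub_nonneg.2 hq1)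
    _ = A * (d n - q * d n) := by ring
    _ ≤ A * (d n - d (n + 1)) :=
        mul_le_mul_of_nonneg_left (sub_le_sub_left (h.next_le_mul hq) _) hA0.le

theorem eventually_step_lt (h : IsDisplacementPair α β d t) {A : ℝ}
    (hA : ∀ s, 0 ≤ s → α s ≤ A) (hβ : ∀ s, 0 ≤ s → β s < 1) (hgap : HasProductGap α β)
    {D : ℝ} (hD : Tendsto d atTop (𝓝 D)) {e : ℝ} (he : D < e) : ∀ᶠ n in atTop, t n < e := by
  have hD0 : 0 ≤ D := ge_of_tendsto' hD fun n => (h.pos n).le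
  have he0 : 0 < e := hD0.trans_lt he
  obtain ⟨b, hDb, hb1⟩ := exists_between ((div_lt_one he0).2 he)
  have hb0 : 0 < b := (div_nonneg hD0 he0.le).trans_lt hDb
  obtain ⟨q, hq1, hq⟩ := hgap b hb1
  have hdrop : Tendsto (fun n => A * (d n - d (n + 1))) atTop (𝓝 0) := by
    simpa only [sub_self, mul_zero, Function.comp_apply] using
      (hD.sub (hD.comp (tendsto_add_atTop_nat 1))).const_mul A
  filter_upwards [hD.eventually_lt_const ((div_lt_iff₀ he0).1 hDb),
    hdrop.eventually_lt_const (mul_pos (sub_pos.2 hq1) he0)] with n hdn hdropn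
  have htn : 0 ≤ t n := (h.step_pos n).le
  rcases le_total (β (t n)) b with hβb | hbβ
  · exact lt_of_mul_lt_mul_left
      ((h.one_sub_mul_step_le hA hq1.le (hq _ htn hβb)).trans_lt hdropn) (sub_pos.2 hq1).le
  · exact lt_of_mul_lt_mul_left
      ((h.mul_step_le_of_le_beta hbβ (hgap.mul_lt_one htn (hβ _ htn)).le).trans_lt hdn) hb0.le

theorem exists_tendsto_step (h : IsDisplacementPair α β d t) {A : ℝ}
    (hA : ∀ s, 0 ≤ s → α s ≤ A) (hβ : ∀ s, 0 ≤ s → β s < 1) (hgap : HasProductGap α β) :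
    ∃ D, 0 ≤ D ∧ Tendsto t atTop (𝓝[>] D) := by
  have hanti : StrictAnti d := h.strictAnti fun n =>
    hgap.mul_lt_one (h.step_pos n).le (hβ _ (h.step_pos n).le)
  have hbdd : BddBelow (range d) := ⟨0, forall_mem_range.2 fun n => (h.pos n).le⟩
  have hD : Tendsto d atTop (𝓝 (⨅ n, d n)) := tendsto_atTop_ciInf hanti.antitone hbdd
  have hlt : ∀ n, ⨅ n, d n < t n := fun n =>
    ((ciInf_le hbdd (n + 1)).trans_lt (hanti n.lt_succ_self)).trans_le (h.le_step n)
  refine ⟨⨅ n, d n, le_ciInf fun n => (h.pos n).le,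
    tendsto_nhdsWithin_iff.2 ⟨tendsto_order.2 ⟨fun a ha => ?_, fun e he => ?_⟩, .of_forall hlt⟩⟩
  · exact .of_forall fun n => ha.trans (hlt n)
  · exact h.eventually_step_lt hA hβ hgap hD he

theorem summable (h : IsDisplacementPair α β d t) {A : ℝ} (hA : ∀ s, 0 ≤ s → α s ≤ A)
    (hβ : ∀ s, 0 ≤ s → β s < 1) (hgap : HasProductGap α β) (hMT : HasPropertyMT β) :
    Summable d := by
  obtain ⟨D, hD0, htD⟩ := h.exists_tendsto_step hA hβ hgap
  obtain ⟨b, hb1, hb⟩ := hMT.exists_eventually_lt hβ hD0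
  obtain ⟨q, hq1, hq⟩ := hgap b hb1
  refine summable_of_ratio_norm_eventually_le hq1 ?_
  filter_upwards [htD.eventually hb] with n hn
  simpa only [Real.norm_of_nonneg (h.pos _).le] using
    h.next_le_mul (hq _ (h.step_pos n).le hn.le)

end IsDisplacementPair

section FixedPoint

variable {X : Type*} [PseudoMetricSpace X] {α β : ℝ → ℝ} {F : X → Set X}

theorem IsAlphaBetaMapping.exists_isDisplacementPair [Nonempty X]
    (hF : IsAlphaBetaMapping α β F) (hpos : ∀ x, 0 < infDist x (F x)) :
    ∃ x : ℕ → X, IsDisplacementPair α β (fun n => infDist (x n) (F (x n)))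
      (fun n => dist (x n) (x (n + 1))) := by
  choose f hfF hdist_le hinfDist_le using hF
  obtain ⟨x₀⟩ := ‹Nonempty X›
  refine ⟨fun n => f^[n] x₀, fun n => hpos _, fun n => ?_, fun n => ?_, fun n => ?_⟩ <;>
    simp only [Function.iterate_succ_apply']
  · exact infDist_le_dist_of_mem (hfF _)
  · exact hdist_le _
  · exact hinfDist_le _

theorem IsAlphaBetaMapping.exists_infDist_eq_zero [Nonempty X] [CompleteSpace X]
    (hF : IsAlphaBetaMapping α β F) {A : ℝ} (hA : ∀ t, 0 ≤ t → α t ≤ A)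
    (hβ : ∀ t, 0 ≤ t → β t < 1) (hgap : HasProductGap α β) (hMT : HasPropertyMT β)
    (hstab : StablyPositive fun x => infDist x (F x)) : ∃ x, infDist x (F x) = 0 := by
  by_contra! hne
  have hpos : ∀ x, 0 < infDist x (F x) := fun x => infDist_nonneg.lt_of_ne' (hne x)
  obtain ⟨x, hx⟩ := hF.exists_isDisplacementPair hpos
  have hsum := hx.summable hA hβ hgap hMT
  have hcauchy : CauchySeq x :=
    cauchySeq_of_dist_le_of_summable _ (hx.step_le_mul hA) (hsum.mul_left A)
  obtain ⟨z, hz⟩ := cauchySeq_tendsto_of_complete hcauchy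
  exact (hpos z).not_ge (hstab.nonpos_of_tendsto hz hsum.tendsto_atTop_zero)

theorem fixed_point_of_polynomial_gamma_general [Nonempty X] [CompleteSpace X]
    {A : ℝ} (hA : ∀ t, 0 ≤ t → α t ≤ A) (hβ : ∀ t, 0 ≤ t → β t < 1)
    (hgap : HasProductGap α β) (hMT : HasPropertyMT β) (hFcl : ∀ x, IsClosed (F x))
    (hF : IsAlphaBetaMapping α β F) (hstab : StablyPositive fun x => infDist x (F x)) :
    ∃ x, x ∈ F x := by
  obtain ⟨x, hx⟩ := hF.exists_infDist_eq_zero hA hβ hgap hMT hstab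
  obtain ⟨y, hy, -⟩ := hF x
  exact ⟨x, ((hFcl x).mem_iff_infDist_zero ⟨y, hy⟩).2 hx⟩

end FixedPoint

theorem one_add_sum_pow_succ_mul_one_sub {R : Type*} [Ring R] (s : R) (m : ℕ) :
    (1 + ∑ i ∈ Finset.range m, s ^ (i + 1)) * (1 - s) = 1 - s ^ (m + 1) := by
  rw [← geom_sum_mul_neg, Finset.sum_range_succ', pow_zero, add_comm]

theorem sum_pow_succ_le {s : ℝ} (hs : s ∈ Ioc (0 : ℝ) 1) (m : ℕ) :
    ∑ i ∈ Finset.range m, s ^ (i + 1) ≤ m := by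
  simpa only [Finset.card_range, nsmul_eq_mul, mul_one] using
    Finset.sum_le_card_nsmul (Finset.range m) _ 1 fun i _ => pow_le_one₀ hs.1.le hs.2

theorem hasProductGap_of_le_one_add_sum_pow {α β : ℝ → ℝ} {m : ℕ}
    (hβ : ∀ t, 0 ≤ t → 0 ≤ β t)
    (hα : ∀ t, 0 ≤ t → α t ≤ 1 + ∑ i ∈ Finset.range m, (1 - β t) ^ (i + 1)) :
    HasProductGap α β := by
  intro b hb
  refine ⟨1 - (1 - b) ^ (m + 1), sub_lt_self 1 (pow_pos (sub_pos.2 hb) _), fun t ht hβb => ?_⟩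
  calc α t * β t
      ≤ (1 + ∑ i ∈ Finset.range m, (1 - β t) ^ (i + 1)) * (1 - (1 - β t)) := by
        rw [sub_sub_cancel]
        exact mul_le_mul_of_nonneg_right (hα t ht) (hβ t ht)
    _ = 1 - (1 - β t) ^ (m + 1) := one_add_sum_pow_succ_mul_one_sub _ m
    _ ≤ 1 - (1 - b) ^ (m + 1) :=
        sub_le_sub_left (pow_le_pow_left₀ (sub_pos.2 hb).le (sub_le_sub_left hβb 1) _) 1

/-- **Remark 3.3 (new fixed point theorems).** If `γ : (0,1] → (0,∞)` satisfies
`γ s ≤ s + s² + ⋯ + s^m`, `β` has property (MT) and `α t ≤ 1 + γ (1 - β t)`, then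
every `(α,β)`-mapping of a nonempty complete metric space into itself with nonempty
closed values whose distance function is stably positive has a fixed point. -/
theorem fixed_point_of_polynomial_gamma
    {X : Type*} [MetricSpace X] [Nonempty X] [CompleteSpace X]
    (m : ℕ) (hm : 1 ≤ m)
    (γ : ℝ → ℝ)
    (hγpos : ∀ s ∈ Set.Ioc (0 : ℝ) 1, 0 < γ s)
    (hγle : ∀ s ∈ Set.Ioc (0 : ℝ) 1, γ s ≤ ∑ i ∈ Finset.range m, s ^ (i + 1))
    (α β : ℝ → ℝ)
    (hα : ∀ t, 0 ≤ t → 1 ≤ α t)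
    (hβ : ∀ t, 0 ≤ t → β t ∈ Set.Ico (0 : ℝ) 1)
    -- β has property (MT)
    (hMT : ∀ t, 0 ≤ t → Filter.limsup β (nhdsWithin t (Set.Ioi t)) < 1)
    (hαγ : ∀ t, 0 ≤ t → α t ≤ 1 + γ (1 - β t))
    (F : X → Set X)
    (hFne : ∀ x, (F x).Nonempty) (hFcl : ∀ x, IsClosed (F x))
    -- F is an (α,β)-mapping
    (hFab : ∀ x : X, ∃ y ∈ F x,
      dist x y ≤ α (dist x y) * Metric.infDist x (F x) ∧
      Metric.infDist y (F y) ≤ β (dist x y) * dist x y)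
    -- the distance function d_F is stably positive
    (hstab : ∀ x : X, 0 < Metric.infDist x (F x) →
      ∃ U ∈ nhds x, ∃ c > (0 : ℝ), ∀ y ∈ U, c ≤ Metric.infDist y (F y)) :
    ∃ x : X, x ∈ F x := by
  have hs : ∀ t, 0 ≤ t → 1 - β t ∈ Set.Ioc (0 : ℝ) 1 := fun t ht =>
    ⟨sub_pos.2 (hβ t ht).2, sub_le_self 1 (hβ t ht).1⟩
  have hαsum : ∀ t, 0 ≤ t → α t ≤ 1 + ∑ i ∈ Finset.range m, (1 - β t) ^ (i + 1) := fun t ht =>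
    (hαγ t ht).trans (add_le_add_right (hγle _ (hs t ht)) 1)
  have hαm : ∀ t, 0 ≤ t → α t ≤ 1 + m := fun t ht =>
    (hαsum t ht).trans (add_le_add_right (sum_pow_succ_le (hs t ht) m) 1)
  have hgap : HasProductGap α β :=
    hasProductGap_of_le_one_add_sum_pow (fun t ht => (hβ t ht).1) hαsum
  exact fixed_point_of_polynomial_gamma_general hαm (fun t ht => (hβ t ht).2) hgap
    hMT hFcl hFab hstab
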